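/- arXiv:math/0309189 — 6 statements merged into one kernel-verified Lean document; each statement's English description precedes it below -/
import Mathlib

section
/- Let R be a commutative ring, let t ≥ 1 and c ≥ 1 be integers, and let a = (a_{i,j}) be a t×(t+c−1) matrix of integers whose entries satisfy the monotonicity convention a_{i,j} ≤ a_{k,l} whenever i ≥ k and j ≤ l. Let F = (F_{i,j}) be a t×(t+c−1) matrix with entries in R such that F_{i,j} = 0 whenever a_{i,j} ≤ 0. If a_{h,h} ≤ 0 for some h with 1 ≤ h ≤ t, then for every strictly increasing choice of t column indices j_1 < j_2 < … < j_t with j_i = i for all i = 1,…,h, the determinant of the t×t submatrix of F on these columns is zero. In particular, when c = 2 the maximal minor of F obtained by deleting any column j with j > h vanishes. -/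
/-- Let `a` be a `t × (t + c - 1)` integer matrix whose entries decrease from
right to left and from top to bottom, and let `F` be a matrix over a commutative
ring `R` with `F i j = 0` whenever `a i j ≤ 0`.  If some diagonal entry
`a h h ≤ 0`, then for every strictly increasing choice of `t` column indices
`cols` with `cols i = i` for all `i ≤ h`, the determinant of the corresponding
`t × t` submatrix of `F` vanishes. -/
theorem stmt_1 {R : Type*} [CommRing R] (t c : ℕ) (ht : 1 ≤ t) (hc : 1 ≤ c)
    (a : Fin t → Fin (t + c - 1) → ℤ)
    (hmono : ∀ (i k : Fin t) (j l : Fin (t + c - 1)), k ≤ i → j ≤ l → a i j ≤ a k l)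
    (F : Fin t → Fin (t + c - 1) → R)
    (hF : ∀ i j, a i j ≤ 0 → F i j = 0)
    (h : Fin t) (hdiag : a h (Fin.castLE (by omega) h) ≤ 0)
    (cols : Fin t → Fin (t + c - 1)) (hcols : StrictMono cols)
    (hfix : ∀ i : Fin t, i ≤ h → (cols i : ℕ) = (i : ℕ)) :
    Matrix.det (Matrix.of fun i k : Fin t => F i (cols k)) = 0 := by
  rw [Matrix.det_apply]
  refine Finset.sum_eq_zero fun σ _ => ?_
  -- pigeonhole: some column `k ≤ h` is matched with a row `σ k ≥ h`
  obtain ⟨k, hk, hσ⟩ : ∃ k : Fin t, k ≤ h ∧ h ≤ σ k := by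
    by_contra hcon
    push Not at hcon
    have hcard : (Finset.Iic h).card ≤ (Finset.Iio h).card :=
      Finset.card_le_card_of_injOn σ
        (fun k hk => by
          have := hcon k (by simpa using hk)
          simpa using this)
        σ.injective.injOn
    simp at hcard
  have hzero : F (σ k) (cols k) = 0 := by
    apply hF
    refine le_trans (hmono _ h _ (Fin.castLE (by omega) h) hσ ?_) hdiag
    rw [Fin.le_def, hfix k hk]
    exact hk
  rw [Finset.prod_eq_zero (Finset.mem_univ k) (by simpa using hzero), smul_zero]
end

section
/- Fix an integer t ≥ 1 and integers a_1,…,a_t ≥ 1 and b_1,…,b_t ≥ 1. Set S = a_1 + ⋯ + a_t, p_i = a_1 + ⋯ + a_{i−1}, q_i = a_{i+1} + ⋯ + a_t + b_i, and let h(z) = Σ_{i=1}^{t} z^{p_i} · (1 + z + ⋯ + z^{a_i − 1}) · (1 + z + ⋯ + z^{q_i − 1}) ∈ ℤ[z]. Then 1 − z^S − Σ_{i=1}^{t} z^{S − a_i + b_i} + Σ_{i=1}^{t} z^{S + b_i} = (1 − z)^2 · h(z). -/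
open Polynomial Finset

/-- The polynomial identity underlying Lemma `mat-hvect`:
`1 - z^S - ∑ᵢ z^(S-aᵢ+bᵢ) + ∑ᵢ z^(S+bᵢ) = (1-z)² · h(z)` in `ℤ[z]`, where
`S = a₁ + ⋯ + a_t`, `pᵢ = a₁ + ⋯ + a_{i-1}`, `qᵢ = a_{i+1} + ⋯ + a_t + bᵢ`, and
`h(z) = ∑ᵢ z^(pᵢ) (1 + z + ⋯ + z^(aᵢ-1)) (1 + z + ⋯ + z^(qᵢ-1))`. -/
theorem stmt_3 (t : ℕ) (ht : 1 ≤ t) (a b : Fin t → ℕ)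
    (ha : ∀ i, 1 ≤ a i) (hb : ∀ i, 1 ≤ b i)
    (S : ℕ) (hS : S = ∑ i, a i)
    (p q : Fin t → ℕ)
    (hp : ∀ i, p i = ∑ k ∈ Finset.Iio i, a k)
    (hq : ∀ i, q i = (∑ k ∈ Finset.Ioi i, a k) + b i)
    (h : Polynomial ℤ)
    (hh : h = ∑ i, X ^ (p i) * (∑ k ∈ Finset.range (a i), X ^ k) *
      (∑ k ∈ Finset.range (q i), X ^ k)) :
    1 - X ^ S - ∑ i, X ^ (S - a i + b i) + ∑ i, X ^ (S + b i) = (1 - X) ^ 2 * h := by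
  have hsum : ∀ i, S = p i + a i + ∑ k ∈ Finset.Ioi i, a k := by
    intro i
    rw [hS, hp i]
    have h1 : (Finset.univ : Finset (Fin t)) = insert i (Finset.Iio i ∪ Finset.Ioi i) := by
      ext j
      simp only [Finset.mem_univ, Finset.mem_insert, Finset.mem_union, Finset.mem_Iio,
        Finset.mem_Ioi, true_iff]
      rcases lt_trichotomy j i with h | h | h <;> simp [h]
    have h2 : Disjoint (Finset.Iio i) (Finset.Ioi i) := by
      rw [Finset.disjoint_left]
      intro j hj hj'
      exact lt_asymm (Finset.mem_Iio.1 hj) (Finset.mem_Ioi.1 hj')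
    rw [h1, Finset.sum_insert (by simp), Finset.sum_union h2]
    ring
  have tel := Finset.prod_one_sub_ordered (Finset.univ : Finset (Fin t))
    (fun i => (1 - X ^ a i : Polynomial ℤ))
  simp only [sub_sub_cancel, Finset.prod_pow_eq_pow_sum] at tel
  rw [← hS] at tel
  have hf : ∀ i : Fin t, (Finset.univ.filter (fun j => j < i)) = Finset.Iio i := by
    intro i
    ext j
    simp
  simp only [hf, ← hp] at tel
  rw [tel, hh, Finset.mul_sum, sub_sub_cancel, ← Finset.sum_sub_distrib, ← Finset.sum_add_distrib]
  refine Finset.sum_congr rfl fun i _ => ?_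
  have e1 : S - a i + b i = p i + q i := by
    have := hsum i
    have := hq i
    omega
  have e2 : S + b i = p i + a i + q i := by
    have := hsum i
    have := hq i
    omega
  have g1 := mul_neg_geom_sum (X : Polynomial ℤ) (a i)
  have g2 := mul_neg_geom_sum (X : Polynomial ℤ) (q i)
  rw [e1, e2]
  calc _ = X ^ p i * (1 - X ^ a i) * (1 - X ^ q i : Polynomial ℤ) := by ring
    _ = _ := by rw [← g1, ← g2]; ring
end

section
/- Fix an integer t ≥ 1 and integers a_1,…,a_t ≥ 1 and b_1,…,b_t ≥ 1 satisfying: b_i ≥ a_i for all i, b_{i+1} ≤ b_i and b_{i+1} − a_{i+1} ≤ b_i − a_i for 1 ≤ i ≤ t−1, and a_i + b_{i+1} − b_i ≥ 1 for 1 ≤ i ≤ t−1. Set S = a_1 + ⋯ + a_t, p_i = a_1 + ⋯ + a_{i−1}, q_i = a_{i+1} + ⋯ + a_t + b_i, and let h(z) = Σ_{i=1}^{t} z^{p_i} · (1 + z + ⋯ + z^{a_i − 1}) · (1 + z + ⋯ + z^{q_i − 1}) ∈ ℤ[z], with coefficients h_k. Then the coefficient sequence of h is of decreasing type: for every k ≥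 0 with k + 2 ≤ deg h, if h_k > h_{k+1} then h_{k+1} > h_{k+2}. -/
open Polynomial Finset


lemma aux_coeff (m a n : ℕ) :
    ((X : Polynomial ℤ) ^ m * ∑ k ∈ Finset.range a, X ^ k).coeff n
      = if m ≤ n ∧ n < m + a then 1 else 0 := by
  rw [Polynomial.coeff_X_pow_mul']
  simp only [Polynomial.finsetSum_coeff, Polynomial.coeff_X_pow, Finset.sum_ite_eq,
    Finset.mem_range]
  split_ifs <;> first | rfl | omega

lemma aux_diff (m a q n : ℕ) :
    ((X : Polynomial ℤ) ^ m * (∑ k ∈ Finset.range a, X ^ k) *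
      (∑ k ∈ Finset.range q, X ^ k)).coeff (n + 1) -
    ((X : Polynomial ℤ) ^ m * (∑ k ∈ Finset.range a, X ^ k) *
      (∑ k ∈ Finset.range q, X ^ k)).coeff n
      = (if m ≤ n + 1 ∧ n + 1 < m + a then 1 else 0)
        - (if m + q ≤ n + 1 ∧ n + 1 < m + q + a then 1 else 0) := by
  rw [← aux_coeff, ← aux_coeff, ← Polynomial.coeff_sub]
  have e : (X : Polynomial ℤ) ^ m * (∑ k ∈ Finset.range a, X ^ k) -
      X ^ (m + q) * (∑ k ∈ Finset.range a, X ^ k) =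
      (X ^ m * (∑ k ∈ Finset.range a, X ^ k) * (∑ k ∈ Finset.range q, X ^ k)) -
      (X ^ m * (∑ k ∈ Finset.range a, X ^ k) * (∑ k ∈ Finset.range q, X ^ k)) * X := by
    have := geom_sum_mul (X : Polynomial ℤ) q
    rw [pow_add]
    linear_combination (X ^ m * (∑ k ∈ Finset.range a, X ^ k)) * this
  rw [e, Polynomial.coeff_sub, Polynomial.coeff_mul_X]

/-- The h-vector of a zero-dimensional scheme whose degree matrix has positive
subdiagonal is of decreasing type (remark after Lemma `mat-hvect`).  Here
`aᵢ = a_{i,i}` and `bᵢ = a_{i,t+1}`; the hypotheses express that the matrix is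
a degree matrix with positive subdiagonal (`a_{i+1,i} = aᵢ + b_{i+1} - bᵢ ≥ 1`),
and the conclusion says: if `h_k > h_{k+1}` then `h_{k+1} > h_{k+2}`. -/
theorem stmt_4 (t : ℕ) (ht : 1 ≤ t) (a b : Fin t → ℕ)
    (ha : ∀ i, 1 ≤ a i) (hb : ∀ i, 1 ≤ b i)
    (hba : ∀ i, a i ≤ b i)
    (hbmono : ∀ i j : Fin t, (j : ℕ) = (i : ℕ) + 1 → b j ≤ b i)
    (hdiff : ∀ i j : Fin t, (j : ℕ) = (i : ℕ) + 1 → b j - a j ≤ b i - a i)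
    (hsubdiag : ∀ i j : Fin t, (j : ℕ) = (i : ℕ) + 1 → 1 ≤ a i + b j - b i)
    (S : ℕ) (hS : S = ∑ i, a i)
    (p q : Fin t → ℕ)
    (hp : ∀ i, p i = ∑ k ∈ Finset.Iio i, a k)
    (hq : ∀ i, q i = (∑ k ∈ Finset.Ioi i, a k) + b i)
    (h : Polynomial ℤ)
    (hh : h = ∑ i, X ^ (p i) * (∑ k ∈ Finset.range (a i), X ^ k) *
      (∑ k ∈ Finset.range (q i), X ^ k)) :
    ∀ k : ℕ, k + 2 ≤ h.natDegree →
      h.coeff k > h.coeff (k + 1) → h.coeff (k + 1) > h.coeff (k + 2) := by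
  classical
  have hsum : ∀ i, p i + q i + a i = S + b i := by
    intro i
    have h1 : ∑ k ∈ Finset.Iio i, a k + (a i + ∑ k ∈ Finset.Ioi i, a k) = ∑ k, a k := by
      rw [← Finset.sum_insert (s := Finset.Ioi i) (by simp),
        ← Finset.sum_union]
      · congr 1
        ext x
        simp only [Finset.mem_union, Finset.mem_Iio, Finset.mem_insert, Finset.mem_Ioi,
          Finset.mem_univ, iff_true]
        rcases lt_trichotomy x i with h | h | h <;> simp [h]
      · rw [Finset.disjoint_left]
        intro x hx
        simp only [Finset.mem_Iio, Finset.mem_insert, Finset.mem_Ioi] at *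
        rintro (h | h)
        · exact absurd h hx.ne
        · exact absurd h hx.asymm
    rw [hp, hq, hS]
    omega
  have hpS : ∀ i, p i + a i ≤ S := by
    intro i
    have := hsum i
    have := hq i
    omega
  have hdif : ∀ n, h.coeff (n + 1) - h.coeff n
      = ∑ i, ((if p i ≤ n + 1 ∧ n + 1 < p i + a i then (1 : ℤ) else 0)
        - (if p i + q i ≤ n + 1 ∧ n + 1 < p i + q i + a i then 1 else 0)) := by
    intro n
    rw [hh, Polynomial.finsetSum_coeff, Polynomial.finsetSum_coeff, ← Finset.sum_sub_distrib]
    exact Finset.sum_congr rfl fun i _ => aux_diff _ _ _ _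
  have hb0 : ∀ n (hn : n < t), b ⟨n, hn⟩ ≤ b ⟨0, ht⟩ := by
    intro n
    induction n with
    | zero => intro _; exact le_rfl
    | succ n ih =>
      intro hn
      exact (hbmono ⟨n, by omega⟩ ⟨n + 1, hn⟩ rfl).trans (ih _)
  have hdeg : h.natDegree + 1 ≤ S + b ⟨0, ht⟩ := by
    have : h.natDegree ≤ S + b ⟨0, ht⟩ - 1 := by
      rw [hh]
      apply Polynomial.natDegree_sum_le_of_forall_le
      intro i _
      have g : ∀ m, (∑ k ∈ Finset.range m, (X : Polynomial ℤ) ^ k).natDegree ≤ m - 1 := by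
        intro m
        apply Polynomial.natDegree_sum_le_of_forall_le
        intro k hk
        rw [Polynomial.natDegree_X_pow]
        have := Finset.mem_range.1 hk
        omega
      have h1 := Polynomial.natDegree_mul_le (p := (X : Polynomial ℤ) ^ (p i) *
        (∑ k ∈ Finset.range (a i), X ^ k)) (q := ∑ k ∈ Finset.range (q i), X ^ k)
      have h2 := Polynomial.natDegree_mul_le (p := (X : Polynomial ℤ) ^ (p i))
        (q := ∑ k ∈ Finset.range (a i), X ^ k)
      rw [Polynomial.natDegree_X_pow] at h2
      have := g (a i)
      have := g (q i)
      have := hsum i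
      have := hb0 i i.2
      have := ha i
      have : b i ≤ b ⟨0, ht⟩ := hb0 i i.2
      omega
    have := hb ⟨0, ht⟩
    omega
  have hcover : ∀ m, m < S + b ⟨0, ht⟩ → ∀ n (hn : n < t),
      p ⟨n, hn⟩ + q ⟨n, hn⟩ ≤ m →
      ∃ j, p j + q j ≤ m ∧ m < p j + q j + a j := by
    intro m hm n
    induction n with
    | zero => intro hn h1; exact ⟨_, h1, by rw [hsum]; exact hm⟩
    | succ n ih =>
      intro hn h1
      by_cases h2 : m < S + b ⟨n + 1, hn⟩
      · exact ⟨_, h1, by rw [hsum]; exact h2⟩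
      · apply ih (by omega)
        have := hsubdiag ⟨n, by omega⟩ ⟨n + 1, hn⟩ rfl
        have := hsum ⟨n, by omega⟩
        omega
  intro k hk hlt
  have d1 := hdif k
  have hex : ∃ i, p i + q i ≤ k + 1 := by
    by_contra hno
    push Not at hno
    have : 0 ≤ h.coeff (k + 1) - h.coeff k := by
      rw [d1]
      apply Finset.sum_nonneg
      intro i _
      have := hno i
      rw [if_neg (c := p i + q i ≤ k + 1 ∧ _) (by omega)]
      split_ifs <;> simp
    omega
  obtain ⟨i, hi⟩ := hex
  obtain ⟨j, hj⟩ := hcover (k + 2) (by omega) i i.2 (by simp only [Fin.eta]; omega)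
  have hSk : S ≤ k + 1 := by
    have := hsum i
    have := hba i
    omega
  have d2 := hdif (k + 1)
  have : h.coeff (k + 1 + 1) - h.coeff (k + 1) < 0 := by
    rw [d2]
    apply Finset.sum_neg'
    · intro i _
      have := hpS i
      rw [if_neg (c := p i ≤ k + 1 + 1 ∧ _) (by omega)]
      split_ifs <;> simp
    · refine ⟨j, Finset.mem_univ _, ?_⟩
      have := hpS j
      rw [if_neg (c := p j ≤ k + 1 + 1 ∧ _) (by omega), if_pos (by omega)]
      simp
  show h.coeff (k + 1 + 1) < h.coeff (k + 1)
  omega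
end

section
/- Let k be a field and let a ≥ 2 be an integer. Let φ : k[x_0, x_1, x_2, x_3] → k[s, t] be the k-algebra homomorphism determined by φ(x_0) = s^{2a}, φ(x_1) = s^{2a−1}t, φ(x_2) = s t^{2a−1}, φ(x_3) = t^{2a}. Then the kernel of φ is the ideal generated by x_0 x_3 − x_1 x_2 together with the 2a − 1 binomials x_0^{2a−2−i} x_2^{i+1} − x_1^{2a−1−i} x_3^{i} for i = 0, 1, …, 2a − 2. -/
open MvPolynomial

theorem aux_div (n x y x' y' : ℕ) (hx : x < n) (hx' : x' < n)
    (h : x + n * y = x' + n * y') : x = x' ∧ y = y' := by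
  have h1 : (x + n * y) % n = (x' + n * y') % n := by rw [h]
  rw [Nat.add_mul_mod_self_left, Nat.add_mul_mod_self_left, Nat.mod_eq_of_lt hx,
    Nat.mod_eq_of_lt hx'] at h1
  subst h1
  refine ⟨rfl, ?_⟩
  have h2 : n * y = n * y' := by omega
  exact Nat.eq_of_mul_eq_mul_left (by omega) h2

theorem aux_nf {A : Type*} [CommRing A] (m : ℕ) (hm : 1 ≤ m) (q0 q1 q2 q3 : A)
    (hQ : q0 * q3 = q1 * q2)
    (hG : ∀ i j, i + j = m → q0 ^ j * q2 ^ (i + 1) = q1 ^ (j + 1) * q3 ^ i) (N : ℕ) :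
    ∀ a b c d : ℕ, b + c ≤ N → ∃ a' b' c' d' : ℕ,
      q0 ^ a * q1 ^ b * q2 ^ c * q3 ^ d = q0 ^ a' * q1 ^ b' * q2 ^ c' * q3 ^ d' ∧
      a + b + c + d = a' + b' + c' + d' ∧
      b + (m + 1) * c + (m + 2) * d = b' + (m + 1) * c' + (m + 2) * d' ∧
      (b' = 0 ∨ c' = 0) ∧ b' ≤ m ∧ c' ≤ m := by
  induction N with
  | zero =>
    intro a b c d h
    exact ⟨a, b, c, d, rfl, rfl, rfl, by omega, by omega, by omega⟩
  | succ N ih =>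
    intro a b c d h
    by_cases h1 : b = 0 ∨ c = 0
    · by_cases h2 : b ≤ m
      · by_cases h3 : c ≤ m
        · exact ⟨a, b, c, d, rfl, rfl, rfl, h1, h2, h3⟩
        · obtain ⟨e, rfl⟩ : ∃ e, c = e + (m + 1) := ⟨c - (m + 1), by omega⟩
          obtain ⟨a', b', c', d', e1, e2, e3, e4⟩ := ih a (b + 1) e (d + m) (by omega)
          refine ⟨a', b', c', d', ?_, by omega, ?_, e4⟩
          · rw [← e1]
            have := hG m 0 (by omega)
            linear_combination (q0 ^ a * q1 ^ b * q2 ^ e * q3 ^ d) * this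
          · rw [← e3]; ring
      · obtain ⟨e, rfl⟩ : ∃ e, b = e + (m + 1) := ⟨b - (m + 1), by omega⟩
        obtain ⟨a', b', c', d', e1, e2, e3, e4⟩ := ih (a + m) e (c + 1) d (by omega)
        refine ⟨a', b', c', d', ?_, by omega, ?_, e4⟩
        · rw [← e1]
          have := hG 0 m (by omega)
          linear_combination (-q0 ^ a * q1 ^ e * q2 ^ c * q3 ^ d) * this
        · rw [← e3]; ring
    · obtain ⟨e, rfl⟩ : ∃ e, b = e + 1 := ⟨b - 1, by omega⟩
      obtain ⟨f, rfl⟩ : ∃ f, c = f + 1 := ⟨c - 1, by omega⟩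
      obtain ⟨a', b', c', d', e1, e2, e3, e4⟩ := ih (a + 1) e f (d + 1) (by omega)
      refine ⟨a', b', c', d', ?_, by omega, ?_, e4⟩
      · rw [← e1]
        linear_combination (-q0 ^ a * q1 ^ e * q2 ^ f * q3 ^ d) * hQ
      · rw [← e3]; ring

/-- a normal form involving only `x₀,x₁,x₃` against one involving only `x₀,x₂,x₃`. -/
theorem aux_mixed {A : Type*} [CommRing A] (m : ℕ) (q0 q1 q2 q3 : A)
    (hG : ∀ i j, i + j = m → q0 ^ j * q2 ^ (i + 1) = q1 ^ (j + 1) * q3 ^ i)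
    (a b d a' c' d' : ℕ) (hb : b ≤ m) (hc : c' ≤ m)
    (hD : a + b + d = a' + c' + d')
    (hT : b + (m + 2) * d = (m + 1) * c' + (m + 2) * d') :
    q0 ^ a * q1 ^ b * q3 ^ d = q0 ^ a' * q2 ^ c' * q3 ^ d' := by
  have hT' : b + c' + (m + 2) * d = 0 + (m + 2) * (c' + d') := by
    linear_combination hT
  by_cases h : b + c' < m + 2
  · obtain ⟨h1, h2⟩ := aux_div _ _ _ _ _ h (by omega) hT'
    obtain rfl : b = 0 := by omega
    obtain rfl : c' = 0 := by omega
    obtain rfl : d = d' := by omega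
    obtain rfl : a = a' := by omega
    simp
  · obtain ⟨r, hr⟩ : ∃ r, b + c' = r + (m + 2) := ⟨b + c' - (m + 2), by omega⟩
    obtain ⟨h1, h2⟩ := aux_div (m + 2) r (d + 1) 0 (c' + d') (by omega) (by omega)
      (by rw [hr] at hT'; linear_combination hT')
    subst h1
    obtain ⟨i, rfl⟩ : ∃ i, c' = i + 1 := ⟨c' - 1, by omega⟩
    obtain ⟨j, rfl⟩ : ∃ j, b = j + 1 := ⟨b - 1, by omega⟩
    obtain rfl : d = i + d' := by omega
    obtain rfl : a' = a + j := by omega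
    have := hG i j (by omega)
    linear_combination (-q0 ^ a * q3 ^ d') * this

theorem aux_eq {A : Type*} [CommRing A] (m : ℕ) (hm : 1 ≤ m) (q0 q1 q2 q3 : A)
    (hQ : q0 * q3 = q1 * q2)
    (hG : ∀ i j, i + j = m → q0 ^ j * q2 ^ (i + 1) = q1 ^ (j + 1) * q3 ^ i)
    (a b c d a' b' c' d' : ℕ)
    (hS : (m + 2) * a + (m + 1) * b + c = (m + 2) * a' + (m + 1) * b' + c')
    (hT : b + (m + 1) * c + (m + 2) * d = b' + (m + 1) * c' + (m + 2) * d') :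
    q0 ^ a * q1 ^ b * q2 ^ c * q3 ^ d = q0 ^ a' * q1 ^ b' * q2 ^ c' * q3 ^ d' := by
  have hD : a + b + c + d = a' + b' + c' + d' := by
    refine Nat.eq_of_mul_eq_mul_left (show 0 < m + 2 by omega) ?_
    linear_combination hS + hT
  obtain ⟨x, y, z, w, e1, e2, e3, e4, e5, e6⟩ :=
    aux_nf m hm q0 q1 q2 q3 hQ hG _ a b c d le_rfl
  obtain ⟨x', y', z', w', f1, f2, f3, f4, f5, f6⟩ :=
    aux_nf m hm q0 q1 q2 q3 hQ hG _ a' b' c' d' le_rfl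
  rw [e1, f1]
  rw [hD, f2] at e2
  rw [hT, f3] at e3
  clear hS hT hD e1 f1 f2 f3
  rcases e4 with rfl | rfl <;> rcases f4 with rfl | rfl
  · have h : z' + (m + 2) * (z + w) = z + (m + 2) * (z' + w') := by
      have : (z' + (m + 2) * (z + w)) + 0 = z + (m + 2) * (z' + w') := by
        linear_combination -e3
      exact this
    obtain ⟨h1, h2⟩ := aux_div _ _ _ _ _ (by omega) (by omega) h
    obtain rfl : z = z' := by omega
    obtain rfl : w = w' := by omega
    obtain rfl : x = x' := by omega
    rfl
  · have := aux_mixed m q0 q1 q2 q3 hG x' y' w' x z w f5 e6 (by omega)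
      (by linear_combination e3)
    simpa using this.symm
  · have := aux_mixed m q0 q1 q2 q3 hG x y w x' z' w' e5 f6 (by omega)
      (by linear_combination -e3)
    simpa using this
  · obtain ⟨h1, h2⟩ := aux_div (m + 2) y w y' w' (by omega) (by omega)
      (by linear_combination -e3)
    subst h1 h2
    obtain rfl : x = x' := by omega
    rfl

/-- Example `rat`: the kernel of the `k`-algebra map
`k[x₀,x₁,x₂,x₃] → k[s,t]`, `x₀ ↦ s^(2a)`, `x₁ ↦ s^(2a-1)t`, `x₂ ↦ st^(2a-1)`,
`x₃ ↦ t^(2a)` (for `a ≥ 2`) is generated by `x₀x₃ - x₁x₂` together with the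
`2a - 1` binomials `x₀^(2a-2-i) x₂^(i+1) - x₁^(2a-1-i) x₃^i`, `i = 0,…,2a-2`. -/
theorem stmt_6 (k : Type*) [Field k] (a : ℕ) (ha : 2 ≤ a) :
    RingHom.ker (aeval (R := k) (fun i : Fin 4 =>
      ![(X 0 : MvPolynomial (Fin 2) k) ^ (2 * a),
        X 0 ^ (2 * a - 1) * X 1,
        X 0 * X 1 ^ (2 * a - 1),
        X 1 ^ (2 * a)] i)) =
    Ideal.span ({X 0 * X 3 - X 1 * X 2} ∪
      Set.range (fun i : Fin (2 * a - 1) =>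
        (X 0 : MvPolynomial (Fin 4) k) ^ (2 * a - 2 - (i : ℕ)) * X 2 ^ ((i : ℕ) + 1)
          - X 1 ^ (2 * a - 1 - (i : ℕ)) * X 3 ^ (i : ℕ))) := by
  obtain ⟨m, hm⟩ : ∃ m, 2 * a = m + 2 := ⟨2 * a - 2, by omega⟩
  have hm1 : 1 ≤ m := by omega
  rw [hm]
  simp only [show m + 2 - 1 = m + 1 by omega, show m + 2 - 2 = m by omega]
  apply le_antisymm
  · set I := Ideal.span ({X 0 * X 3 - X 1 * X 2} ∪
      Set.range (fun i : Fin (m + 1) =>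
        (X 0 : MvPolynomial (Fin 4) k) ^ (m - (i : ℕ)) * X 2 ^ ((i : ℕ) + 1)
          - X 1 ^ (m + 1 - (i : ℕ)) * X 3 ^ (i : ℕ))) with hI
    set φ := aeval (R := k) (fun i : Fin 4 =>
      ![(X 0 : MvPolynomial (Fin 2) k) ^ (m + 2), X 0 ^ (m + 1) * X 1,
        X 0 * X 1 ^ (m + 1), X 1 ^ (m + 2)] i) with hφ
    let q : Fin 4 → MvPolynomial (Fin 4) k ⧸ I := fun i => Ideal.Quotient.mk I (X i)
    have hQ : q 0 * q 3 = q 1 * q 2 := by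
      have : (X 0 * X 3 - X 1 * X 2 : MvPolynomial (Fin 4) k) ∈ I :=
        Ideal.subset_span (Or.inl rfl)
      have := Ideal.Quotient.eq.mpr this
      simpa [q] using this
    have hG : ∀ i j, i + j = m →
        q 0 ^ j * q 2 ^ (i + 1) = q 1 ^ (j + 1) * q 3 ^ i := by
      intro i j hij
      have : ((X 0 : MvPolynomial (Fin 4) k) ^ j * X 2 ^ (i + 1)
          - X 1 ^ (j + 1) * X 3 ^ i) ∈ I := by
        refine Ideal.subset_span (Or.inr ⟨⟨i, by omega⟩, ?_⟩)
        simp only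
        rw [show m - i = j by omega, show m + 1 - i = j + 1 by omega]
      have := Ideal.Quotient.eq.mpr this
      simpa [q] using this
    let w : (Fin 4 →₀ ℕ) → (Fin 2 →₀ ℕ) := fun u =>
      Finsupp.single 0 ((m + 2) * u 0 + (m + 1) * u 1 + u 2) +
      Finsupp.single 1 (u 1 + (m + 1) * u 2 + (m + 2) * u 3)
    have hmk : ∀ u : Fin 4 →₀ ℕ, Ideal.Quotient.mk I (monomial u 1) =
        q 0 ^ u 0 * q 1 ^ u 1 * q 2 ^ u 2 * q 3 ^ u 3 := by
      intro u
      rw [monomial_eq, Finsupp.prod_fintype _ _ (by simp)]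
      simp [Fin.prod_univ_four, q]
    have hw : ∀ u v, w u = w v →
        Ideal.Quotient.mk I (monomial u 1) = Ideal.Quotient.mk I (monomial v 1) := by
      intro u v h
      rw [hmk, hmk]
      refine aux_eq m hm1 _ _ _ _ hQ hG _ _ _ _ _ _ _ _ ?_ ?_
      · simpa [w] using DFunLike.congr_fun h 0
      · simpa [w] using DFunLike.congr_fun h 1
    have hφm : ∀ u, φ (monomial u 1) = monomial (w u) 1 := by
      intro u
      rw [hφ, aeval_monomial, Finsupp.prod_fintype _ _ (by simp),
        monomial_eq, Finsupp.prod_fintype _ _ (by simp)]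
      simp [Fin.prod_univ_four, w]
      ring
    let ρ : MvPolynomial (Fin 2) k →ₗ[k] (MvPolynomial (Fin 4) k ⧸ I) :=
      (basisMonomials (Fin 2) k).constr k
        (fun v => Ideal.Quotient.mk I (monomial (Function.invFun w v) 1))
    have hρ : ρ ∘ₗ φ.toLinearMap = (Ideal.Quotient.mkₐ k I).toLinearMap := by
      refine (basisMonomials (Fin 4) k).ext fun u => ?_
      have h1 : ρ (monomial (w u) 1) =
          Ideal.Quotient.mk I (monomial (Function.invFun w (w u)) 1) := by
        have := (basisMonomials (Fin 2) k).constr_basis k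
          (fun v => Ideal.Quotient.mk I (monomial (Function.invFun w v) (1 : k))) (w u)
        rwa [coe_basisMonomials] at this
      simp only [coe_basisMonomials, LinearMap.comp_apply, AlgHom.toLinearMap_apply]
      rw [hφm, h1, Ideal.Quotient.mkₐ_eq_mk]
      exact hw _ _ (Function.invFun_eq ⟨u, rfl⟩)
    intro p hp
    have hp' : φ p = 0 := hp
    have := LinearMap.congr_fun hρ p
    simp only [LinearMap.comp_apply, AlgHom.toLinearMap_apply, hp', map_zero] at this
    exact Ideal.Quotient.eq_zero_iff_mem.mp this.symm
  · rw [Ideal.span_le]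
    rintro p (rfl | ⟨i, rfl⟩)
    · simp only [SetLike.mem_coe, RingHom.mem_ker, map_sub, map_mul, aeval_X]
      simp
      ring
    · obtain ⟨i, hi⟩ := i
      obtain ⟨j, rfl⟩ : ∃ j, m = i + j := ⟨m - i, by omega⟩
      simp only [SetLike.mem_coe, RingHom.mem_ker, map_sub, map_mul, map_pow, aeval_X,
        show i + j - i = j by omega, show i + j + 1 - i = j + 1 by omega]
      simp
      ring
end

section
/- Let k be a field and let a ≥ 2 be an even integer. Let φ : k[x_0, x_1, x_2, x_3] → k[s, t] be the k-algebra homomorphism determined by φ(x_0) = s^{2a}, φ(x_1) = s^{a+1} t^{a−1}, φ(x_2) = s^{a−1} t^{a+1}, φ(x_3) = t^{2a}. Then the kernel of φ is the ideal generated by the four polynomials x_0 x_3 − x_1 x_2, x_0^2 x_2^{a−1} − x_1^{a+1}, x_0 x_2^{a} − x_1^{a} x_3, and x_2^{a+1} − x_1^{a−1} x_3^2. -/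
open MvPolynomial

/-- Normal-form exponents. -/
def RedExp (b p0 p1 p2 p3 : ℕ) : Prop :=
  ¬ (1 ≤ p0 ∧ 1 ≤ p3) ∧ ¬ (2 ≤ p0 ∧ b ≤ p2) ∧ ¬ (1 ≤ p0 ∧ b + 1 ≤ p2) ∧ ¬ (b ≤ p1 ∧ 2 ≤ p3)

lemma exists_red {R : Type*} [CommRing R] (b : ℕ) (x0 x1 x2 x3 : R)
    (h1 : x0 * x3 = x1 * x2) (h2 : x0 ^ 2 * x2 ^ b = x1 ^ (b + 2))
    (h3 : x0 * x2 ^ (b + 1) = x1 ^ (b + 1) * x3) (h4 : x2 ^ (b + 2) = x1 ^ b * x3 ^ 2) :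
    ∀ n p0 p1 p2 p3 : ℕ, 2 * p0 + p3 = n → ∃ q0 q1 q2 q3, RedExp b q0 q1 q2 q3 ∧
      (2 * b + 2) * q0 + (b + 2) * q1 + b * q2 = (2 * b + 2) * p0 + (b + 2) * p1 + b * p2 ∧
      b * q1 + (b + 2) * q2 + (2 * b + 2) * q3 = b * p1 + (b + 2) * p2 + (2 * b + 2) * p3 ∧
      x0 ^ q0 * x1 ^ q1 * x2 ^ q2 * x3 ^ q3 = x0 ^ p0 * x1 ^ p1 * x2 ^ p2 * x3 ^ p3 := by
  intro n
  induction n using Nat.strong_induction_on with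
  | _ n ih =>
  intro p0 p1 p2 p3 hn
  by_cases c1 : 1 ≤ p0 ∧ 1 ≤ p3
  · obtain ⟨u, rfl⟩ := Nat.exists_eq_add_of_le' c1.1
    obtain ⟨v, rfl⟩ := Nat.exists_eq_add_of_le' c1.2
    obtain ⟨q0, q1, q2, q3, hr, e1, e2, e3⟩ := ih _ (by omega) u (p1 + 1) (p2 + 1) v rfl
    refine ⟨q0, q1, q2, q3, hr, by rw [e1]; ring, by rw [e2]; ring, ?_⟩
    rw [e3]
    linear_combination (-(x0 ^ u * x1 ^ p1 * x2 ^ p2 * x3 ^ v)) * h1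
  by_cases c2 : 2 ≤ p0 ∧ b ≤ p2
  · obtain ⟨u, rfl⟩ := Nat.exists_eq_add_of_le' c2.1
    obtain ⟨v, rfl⟩ := Nat.exists_eq_add_of_le' c2.2
    obtain ⟨q0, q1, q2, q3, hr, e1, e2, e3⟩ := ih _ (by omega) u (p1 + (b + 2)) v p3 rfl
    refine ⟨q0, q1, q2, q3, hr, by rw [e1]; ring, by rw [e2]; ring, ?_⟩
    rw [e3]
    linear_combination (-(x0 ^ u * x1 ^ p1 * x2 ^ v * x3 ^ p3)) * h2
  by_cases c3 : 1 ≤ p0 ∧ b + 1 ≤ p2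
  · obtain ⟨u, rfl⟩ := Nat.exists_eq_add_of_le' c3.1
    obtain ⟨v, rfl⟩ := Nat.exists_eq_add_of_le' c3.2
    obtain ⟨q0, q1, q2, q3, hr, e1, e2, e3⟩ := ih _ (by omega) u (p1 + (b + 1)) v (p3 + 1) rfl
    refine ⟨q0, q1, q2, q3, hr, by rw [e1]; ring, by rw [e2]; ring, ?_⟩
    rw [e3]
    linear_combination (-(x0 ^ u * x1 ^ p1 * x2 ^ v * x3 ^ p3)) * h3
  by_cases c4 : b ≤ p1 ∧ 2 ≤ p3
  · obtain ⟨u, rfl⟩ := Nat.exists_eq_add_of_le' c4.1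
    obtain ⟨v, rfl⟩ := Nat.exists_eq_add_of_le' c4.2
    obtain ⟨q0, q1, q2, q3, hr, e1, e2, e3⟩ := ih _ (by omega) p0 u (p2 + (b + 2)) v rfl
    refine ⟨q0, q1, q2, q3, hr, by rw [e1]; ring, by rw [e2]; ring, ?_⟩
    rw [e3]
    linear_combination (x0 ^ p0 * x1 ^ u * x2 ^ p2 * x3 ^ v) * h4
  exact ⟨p0, p1, p2, p3, ⟨c1, c2, c3, c4⟩, rfl, rfl, rfl⟩

lemma red_aux (b p0 p1 p2 p3 q0 q1 q2 q3 : ℕ) (e f : ℤ)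
    (hp : RedExp b p0 p1 p2 p3) (hq : RedExp b q0 q1 q2 q3)
    (h0 : (p0 : ℤ) - q0 = e - f) (h1 : (p1 : ℤ) - q1 = (b + 1) * f - e)
    (h2 : (p2 : ℤ) - q2 = - e - (b + 1) * f) (h3 : (p3 : ℤ) - q3 = e + f) (hf : 1 ≤ f) : False := by
  have g1 : (b : ℤ) ≤ b * f := by nlinarith
  rw [add_mul, one_mul] at h1 h2
  generalize (b : ℤ) * f = g at *
  unfold RedExp at hp hq
  omega

lemma red_unique (b p0 p1 p2 p3 q0 q1 q2 q3 : ℕ) (hb : Odd b)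
    (hp : RedExp b p0 p1 p2 p3) (hq : RedExp b q0 q1 q2 q3)
    (e1 : (2 * b + 2) * q0 + (b + 2) * q1 + b * q2 = (2 * b + 2) * p0 + (b + 2) * p1 + b * p2)
    (e2 : b * q1 + (b + 2) * q2 + (2 * b + 2) * q3 = b * p1 + (b + 2) * p2 + (2 * b + 2) * p3) :
    p0 = q0 ∧ p1 = q1 ∧ p2 = q2 ∧ p3 = q3 := by
  obtain ⟨c, rfl⟩ := hb
  have hs : (p0 + p1 + p2 + p3 : ℤ) = q0 + q1 + q2 + q3 := by
    have : (4 * (c : ℤ) + 4) * (p0 + p1 + p2 + p3) = (4 * (c : ℤ) + 4) * (q0 + q1 + q2 + q3) := by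
      zify at e1 e2
      linear_combination - e1 - e2
    exact mul_left_cancel₀ (by positivity) this
  have hd : ((c : ℤ) + 1) * (((p0 : ℤ) - q0) - (p3 - q3)) * 2 = (p2 - q2) - (p1 - q1) := by
    zify at e1 e2
    linear_combination -e1 - (2 * c + 2) * hs
  obtain ⟨e, he⟩ : ∃ e : ℤ, (p0 : ℤ) - q0 + (p3 - q3) = 2 * e := by
    generalize ((c : ℤ) + 1) * (((p0 : ℤ) - q0) - (p3 - q3)) = t at hd
    exact ⟨((p0 : ℤ) - q0 + (p3 - q3)) / 2, by omega⟩
  obtain ⟨f, hf⟩ : ∃ f : ℤ, (p3 : ℤ) - q3 = e + f := ⟨p3 - q3 - e, by ring⟩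
  have h0 : (p0 : ℤ) - q0 = e - f := by linarith
  rw [h0, hf] at hd
  have h1 : (p1 : ℤ) - q1 = ((2 * c + 1 : ℕ) + 1) * f - e := by
    push_cast
    nlinarith
  have h2 : (p2 : ℤ) - q2 = - e - ((2 * c + 1 : ℕ) + 1) * f := by
    push_cast at h1 ⊢
    linarith
  rcases lt_trichotomy f 0 with h | h | h
  · exact (red_aux _ q0 q1 q2 q3 p0 p1 p2 p3 (-e) (-f) hq hp (by linarith) (by linarith)
      (by linarith) (by linarith) (by omega)).elim
  · subst h
    rw [mul_zero] at h1 h2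
    have hp1 := hp.1
    have hq1 := hq.1
    clear hp hq e1 e2 hd
    omega
  · exact (red_aux _ p0 p1 p2 p3 q0 q1 q2 q3 e f hp hq h0 h1 h2 hf (by omega)).elim

lemma prod_eq {R : Type*} [CommRing R] (b : ℕ) (hb : Odd b) (x0 x1 x2 x3 : R)
    (h1 : x0 * x3 = x1 * x2) (h2 : x0 ^ 2 * x2 ^ b = x1 ^ (b + 2))
    (h3 : x0 * x2 ^ (b + 1) = x1 ^ (b + 1) * x3) (h4 : x2 ^ (b + 2) = x1 ^ b * x3 ^ 2)
    (p0 p1 p2 p3 q0 q1 q2 q3 : ℕ)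
    (e1 : (2 * b + 2) * q0 + (b + 2) * q1 + b * q2 = (2 * b + 2) * p0 + (b + 2) * p1 + b * p2)
    (e2 : b * q1 + (b + 2) * q2 + (2 * b + 2) * q3 = b * p1 + (b + 2) * p2 + (2 * b + 2) * p3) :
    x0 ^ q0 * x1 ^ q1 * x2 ^ q2 * x3 ^ q3 = x0 ^ p0 * x1 ^ p1 * x2 ^ p2 * x3 ^ p3 := by
  obtain ⟨u0, u1, u2, u3, hu, a1, a2, a3⟩ :=
    exists_red b x0 x1 x2 x3 h1 h2 h3 h4 _ p0 p1 p2 p3 rfl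
  obtain ⟨v0, v1, v2, v3, hv, b1, b2, b3⟩ :=
    exists_red b x0 x1 x2 x3 h1 h2 h3 h4 _ q0 q1 q2 q3 rfl
  obtain ⟨rfl, rfl, rfl, rfl⟩ := red_unique b u0 u1 u2 u3 v0 v1 v2 v3 hb hu hv
    (by omega) (by omega)
  rw [← a3, ← b3]

/-- A monomial-type algebra map: kernel criterion. -/
lemma ker_le_of_monomial {k σ τ : Type*} [Field k] (φ : MvPolynomial σ k →ₐ[k] MvPolynomial τ k)
    (w : (σ →₀ ℕ) → (τ →₀ ℕ)) (hφ : ∀ p, φ (monomial p 1) = monomial (w p) 1)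
    (I : Ideal (MvPolynomial σ k))
    (hI : ∀ p q, w p = w q → Ideal.Quotient.mk I (monomial p 1) = Ideal.Quotient.mk I (monomial q 1)) :
    RingHom.ker φ ≤ I := by
  let L : MvPolynomial τ k →ₗ[k] (MvPolynomial σ k ⧸ I) :=
    (basisMonomials τ k).constr k
      (fun m => Ideal.Quotient.mk I (monomial (Function.invFun w m) 1))
  have hL : L ∘ₗ φ.toLinearMap = (Ideal.Quotient.mkₐ k I).toLinearMap := by
    apply (basisMonomials σ k).ext
    intro p
    have : L (monomial (w p) 1) = Ideal.Quotient.mk I (monomial (Function.invFun w (w p)) 1) := by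
      have := (basisMonomials τ k).constr_basis k
        (fun m => Ideal.Quotient.mk I (monomial (Function.invFun w m) 1)) (w p)
      rwa [coe_basisMonomials] at this
    simp only [coe_basisMonomials, LinearMap.comp_apply, AlgHom.toLinearMap_apply, hφ, this]
    exact hI _ _ (Function.invFun_eq ⟨p, rfl⟩)
  intro f hf
  rw [RingHom.mem_ker] at hf
  have := LinearMap.congr_fun hL f
  simp only [LinearMap.comp_apply, AlgHom.toLinearMap_apply, hf, map_zero] at this
  exact Ideal.Quotient.eq_zero_iff_mem.mp this.symm

/-- Remark `rat2`, even case: for `a ≥ 2` even, the kernel of the `k`-algebra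
map `k[x₀,x₁,x₂,x₃] → k[s,t]`, `x₀ ↦ s^(2a)`, `x₁ ↦ s^(a+1)t^(a-1)`,
`x₂ ↦ s^(a-1)t^(a+1)`, `x₃ ↦ t^(2a)` is generated by
`x₀x₃ - x₁x₂`, `x₀²x₂^(a-1) - x₁^(a+1)`, `x₀x₂^a - x₁^a x₃`,
`x₂^(a+1) - x₁^(a-1) x₃²`. -/
theorem stmt_7 (k : Type*) [Field k] (a : ℕ) (ha : 2 ≤ a) (hae : Even a) :
    RingHom.ker (aeval (R := k) (fun i : Fin 4 =>
      ![(X 0 : MvPolynomial (Fin 2) k) ^ (2 * a),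
        X 0 ^ (a + 1) * X 1 ^ (a - 1),
        X 0 ^ (a - 1) * X 1 ^ (a + 1),
        X 1 ^ (2 * a)] i)) =
    Ideal.span ({X 0 * X 3 - X 1 * X 2,
      (X 0 : MvPolynomial (Fin 4) k) ^ 2 * X 2 ^ (a - 1) - X 1 ^ (a + 1),
      X 0 * X 2 ^ a - X 1 ^ a * X 3,
      X 2 ^ (a + 1) - X 1 ^ (a - 1) * X 3 ^ 2} : Set (MvPolynomial (Fin 4) k)) := by
  obtain ⟨b, rfl⟩ : ∃ b, a = b + 1 := ⟨a - 1, by omega⟩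
  have hb : Odd b := by
    rcases Nat.even_or_odd b with h | h
    · exact absurd hae (by simpa [Nat.even_add_one] using h)
    · exact h
  simp only [Nat.add_sub_cancel]
  apply le_antisymm
  · apply ker_le_of_monomial _ (fun p =>
      Finsupp.single 0 ((2 * b + 2) * p 0 + (b + 2) * p 1 + b * p 2) +
      Finsupp.single 1 (b * p 1 + (b + 2) * p 2 + (2 * b + 2) * p 3))
    · intro p
      rw [← mul_one (1 : k), ← monomial_mul, mul_one, ← X_pow_eq_monomial, ← X_pow_eq_monomial,
        aeval_monomial, Finsupp.prod_fintype _ _ (by simp)]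
      simp only [map_one, one_mul, Fin.prod_univ_four]
      simp
      ring
    · intro p q hpq
      have w0 := DFunLike.congr_fun hpq 0
      have w1 := DFunLike.congr_fun hpq 1
      simp at w0 w1
      have key : ∀ p : Fin 4 →₀ ℕ, (monomial p 1 : MvPolynomial (Fin 4) k) =
          X 0 ^ p 0 * X 1 ^ p 1 * X 2 ^ p 2 * X 3 ^ p 3 := by
        intro p
        rw [monomial_eq, Finsupp.prod_fintype _ _ (by simp)]
        simp [Fin.prod_univ_four]
      rw [key, key]
      simp only [map_mul, map_pow]
      apply prod_eq b hb _ _ _ _ _ _ _ _ _ _ _ _ _ _ _ _ w0 w1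
      all_goals
        simp only [← map_mul, ← map_pow]
        rw [Ideal.Quotient.eq]
        apply Ideal.subset_span
        simp
  · rw [Ideal.span_le]
    intro f hf
    simp only [Set.mem_insert_iff, Set.mem_singleton_iff] at hf
    rcases hf with rfl | rfl | rfl | rfl <;>
    · simp only [SetLike.mem_coe, RingHom.mem_ker, map_sub, map_mul, map_pow, aeval_X]
      simp
      ring
end

section
/- Let k be a field and let a ≥ 3 be an odd integer. Let φ : k[x_0, x_1, x_2, x_3] → k[s, t] be the k-algebra homomorphism determined by φ(x_0) = s^{2a}, φ(x_1) = s^{a+2} t^{a−2}, φ(x_2) = s^{a−2} t^{a+2}, φ(x_3) = t^{2a}. Then the kernel of φ is the ideal generated by x_0 x_3 − x_1 x_2 together with the five binomials x_0^{4−i} x_2^{a−2+i} − x_1^{a+2−i} x_3^{i} for i = 0, 1, 2, 3, 4. -/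
open MvPolynomial


/-- Reduce a monomial to one not divisible by `AD`. -/
lemma rat2_red {R : Type*} [CommRing R] {A B C D : R} (h : A * D = B * C) (u0 : ℕ) :
    ∀ u1 u2 u3 : ℕ, ∃ w0 w1 w2 w3 t : ℕ, (w0 = 0 ∨ w3 = 0) ∧ u0 = w0 + t ∧ u3 = w3 + t ∧
      w1 = u1 + t ∧ w2 = u2 + t ∧
      A ^ u0 * B ^ u1 * C ^ u2 * D ^ u3 = A ^ w0 * B ^ w1 * C ^ w2 * D ^ w3 := by
  induction u0 with
  | zero => intro u1 u2 u3; exact ⟨0, u1, u2, u3, 0, by simp⟩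
  | succ n ih =>
    intro u1 u2 u3
    cases u3 with
    | zero => exact ⟨n + 1, u1, u2, 0, 0, by simp⟩
    | succ m =>
      obtain ⟨w0, w1, w2, w3, t, h0, h1, h2, h3, h4, h5⟩ := ih (u1 + 1) (u2 + 1) m
      refine ⟨w0, w1, w2, w3, t + 1, h0, by omega, by omega, by omega, by omega, ?_⟩
      rw [← h5]
      linear_combination (A ^ n * B ^ u1 * C ^ u2 * D ^ m) * h

/-- The main combinatorial step, by induction on `j`. -/
lemma rat2_aux {R : Type*} [CommRing R] {A B C D : R} (b : ℕ) (h : A * D = B * C)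
    (hi : ∀ i : ℕ, i ≤ 4 → A ^ (4 - i) * C ^ (b + i) = B ^ (b + 4 - i) * D ^ i) (j : ℕ) :
    ∀ (l : ℤ) (u0 u1 u2 u3 v0 v1 v2 v3 : ℕ),
      (u0 : ℤ) - v0 = 4 * j + l → (u1 : ℤ) - v1 = -((b + 4) * j) - l →
      (u2 : ℤ) - v2 = b * j - l → (u3 : ℤ) - v3 = l →
      A ^ u0 * B ^ u1 * C ^ u2 * D ^ u3 = A ^ v0 * B ^ v1 * C ^ v2 * D ^ v3 := by
  induction j with
  | zero =>
    intro l u0 u1 u2 u3 v0 v1 v2 v3 e0 e1 e2 e3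
    obtain ⟨w0, w1, w2, w3, t, h0, h1, h2, h3, h4, h5⟩ := rat2_red h u0 u1 u2 u3
    obtain ⟨z0, z1, z2, z3, r, g0, g1, g2, g3, g4, g5⟩ := rat2_red h v0 v1 v2 v3
    rw [h5, g5]
    simp only [Nat.cast_zero, mul_zero] at e0 e1 e2
    have : w0 = z0 ∧ w1 = z1 ∧ w2 = z2 ∧ w3 = z3 := by omega
    obtain ⟨rfl, rfl, rfl, rfl⟩ := this
    rfl
  | succ j ih =>
    intro l u0 u1 u2 u3 v0 v1 v2 v3 e0 e1 e2 e3
    obtain ⟨w0, w1, w2, w3, t, h0, h1, h2, h3, h4, h5⟩ := rat2_red h u0 u1 u2 u3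
    obtain ⟨z0, z1, z2, z3, r, g0, g1, g2, g3, g4, g5⟩ := rat2_red h v0 v1 v2 v3
    rw [h5, g5]
    have hbj : (0 : ℤ) ≤ b * j := by positivity
    obtain ⟨L, hL⟩ : ∃ L : ℕ, (w3 : ℤ) + L = z3 := ⟨z3 - w3, by omega⟩
    have f1 : (w1 : ℤ) - z1 = -((b + 4) * (j + 1)) + L := by push_cast at e1; linarith
    have f2 : (w2 : ℤ) - z2 = b * j + b + L := by
      push_cast at e2; linarith
    obtain ⟨i, hi4, q1, q2, q3⟩ : ∃ i : ℕ, i ≤ 4 ∧ i ≤ L ∧ 4 - i ≤ w0 ∧ b + i ≤ w2 :=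
      ⟨min 4 L, by omega, by omega, by omega, by omega⟩
    obtain ⟨p0, rfl⟩ := Nat.exists_eq_add_of_le q2
    obtain ⟨p2, rfl⟩ := Nat.exists_eq_add_of_le q3
    have key := ih (-(L : ℤ) + i) p0 (w1 + (b + 4 - i)) p2 (w3 + i) z0 z1 z2 z3
      (by omega) (by
        have : ((b + 4 - i : ℕ) : ℤ) = b + 4 - i := by omega
        push_cast [this]; linarith)
      (by push_cast at f2; linarith) (by push_cast; linarith)
    rw [← key, pow_add, pow_add C, pow_add B, pow_add D]
    linear_combination (A ^ p0 * C ^ p2 * B ^ w1 * D ^ w3) * hi i hi4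

lemma rat2_main {R : Type*} [CommRing R] {A B C D : R} (b : ℕ) (hb : Odd b) (h : A * D = B * C)
    (hi : ∀ i : ℕ, i ≤ 4 → A ^ (4 - i) * C ^ (b + i) = B ^ (b + 4 - i) * D ^ i)
    (u0 u1 u2 u3 v0 v1 v2 v3 : ℕ)
    (hs : 2 * (b + 2) * u0 + (b + 4) * u1 + b * u2 = 2 * (b + 2) * v0 + (b + 4) * v1 + b * v2)
    (ht : b * u1 + (b + 4) * u2 + 2 * (b + 2) * u3 =
      b * v1 + (b + 4) * v2 + 2 * (b + 2) * v3) :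
    A ^ u0 * B ^ u1 * C ^ u2 * D ^ u3 = A ^ v0 * B ^ v1 * C ^ v2 * D ^ v3 := by
  zify at hs ht
  have hsum : (u0 : ℤ) + u1 + u2 + u3 = v0 + v1 + v2 + v3 := by
    have : (2 * (b + 2) : ℤ) ≠ 0 := by positivity
    apply mul_left_cancel₀ this
    linarith
  have e : ((b : ℤ) + 4) * ((u0 - v0) - (u3 - v3)) = 4 * -((u1 - v1) + (u3 - v3)) := by
    linear_combination hs - b * hsum
  have hc : IsCoprime (4 : ℤ) ((b : ℤ) + 4) := by
    have : IsCoprime (2 : ℤ) ((b : ℤ) + 4) := by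
      obtain ⟨c, rfl⟩ := hb
      exact ⟨-(c + 2), 1, by push_cast; ring⟩
    have h2 := this.pow_left (m := 2)
    norm_num at h2
    exact h2
  obtain ⟨j, hj⟩ := hc.dvd_of_dvd_mul_left (Dvd.intro _ e.symm)
  have e1 : (u1 : ℤ) - v1 = -((b + 4) * j) - (u3 - v3) := by
    rw [hj] at e
    linarith
  obtain ⟨n, rfl | rfl⟩ := j.eq_nat_or_neg
  · exact rat2_aux b h hi n (u3 - v3) _ _ _ _ _ _ _ _ (by linarith) e1 (by linarith) rfl
  · exact (rat2_aux b h hi n (v3 - u3) _ _ _ _ _ _ _ _ (by linarith) (by linarith)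
      (by linarith) rfl).symm

/-- Remark `rat2`, odd case: for `a ≥ 3` odd, the kernel of the `k`-algebra map
`k[x₀,x₁,x₂,x₃] → k[s,t]`, `x₀ ↦ s^(2a)`, `x₁ ↦ s^(a+2)t^(a-2)`,
`x₂ ↦ s^(a-2)t^(a+2)`, `x₃ ↦ t^(2a)` is generated by `x₀x₃ - x₁x₂` together
with the five binomials `x₀^(4-i) x₂^(a-2+i) - x₁^(a+2-i) x₃^i`, `i = 0,…,4`. -/
theorem stmt_8 (k : Type*) [Field k] (a : ℕ) (ha : 3 ≤ a) (hao : Odd a) :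
    RingHom.ker (aeval (R := k) (fun i : Fin 4 =>
      ![(X 0 : MvPolynomial (Fin 2) k) ^ (2 * a),
        X 0 ^ (a + 2) * X 1 ^ (a - 2),
        X 0 ^ (a - 2) * X 1 ^ (a + 2),
        X 1 ^ (2 * a)] i)) =
    Ideal.span ({X 0 * X 3 - X 1 * X 2} ∪
      Set.range (fun i : Fin 5 =>
        (X 0 : MvPolynomial (Fin 4) k) ^ (4 - (i : ℕ)) * X 2 ^ (a - 2 + (i : ℕ))
          - X 1 ^ (a + 2 - (i : ℕ)) * X 3 ^ (i : ℕ))) := by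
  obtain ⟨b, rfl⟩ : ∃ b, a = b + 2 := ⟨a - 2, by omega⟩
  have hb : Odd b := by
    rw [Nat.odd_iff] at hao ⊢
    omega
  apply le_antisymm
  · intro p hp
    rw [RingHom.mem_ker] at hp
    set I := Ideal.span ({X 0 * X 3 - X 1 * X 2} ∪
      Set.range (fun i : Fin 5 =>
        (X 0 : MvPolynomial (Fin 4) k) ^ (4 - (i : ℕ)) * X 2 ^ (b + 2 - 2 + (i : ℕ))
          - X 1 ^ (b + 2 + 2 - (i : ℕ)) * X 3 ^ (i : ℕ))) with hI
    let q := Ideal.Quotient.mkₐ k I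
    have h : q (X 0) * q (X 3) = q (X 1) * q (X 2) := by
      rw [← map_mul, ← map_mul]
      apply Ideal.Quotient.eq.2
      exact Ideal.subset_span (Or.inl rfl)
    have hi : ∀ i : ℕ, i ≤ 4 → q (X 0) ^ (4 - i) * q (X 2) ^ (b + i) =
        q (X 1) ^ (b + 4 - i) * q (X 3) ^ i := by
      intro i hi
      simp only [← map_pow, ← map_mul]
      apply Ideal.Quotient.eq.2
      exact Ideal.subset_span (Or.inr ⟨⟨i, by omega⟩, rfl⟩)
    let E : (Fin 4 →₀ ℕ) → (Fin 2 →₀ ℕ) := fun u =>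
      Finsupp.single 0 (2 * (b + 2) * u 0 + (b + 4) * u 1 + b * u 2) +
      Finsupp.single 1 (b * u 1 + (b + 4) * u 2 + 2 * (b + 2) * u 3)
    let g : (Fin 4 →₀ ℕ) → MvPolynomial (Fin 4) k ⧸ I := fun u => q (monomial u 1)
    have hg : ∀ u, g u = q (X 0) ^ u 0 * q (X 1) ^ u 1 * q (X 2) ^ u 2 * q (X 3) ^ u 3 := by
      intro u
      simp only [g, ← map_pow, ← map_mul]
      rw [monomial_eq, Finsupp.prod_fintype _ _ (by simp)]
      simp [Fin.prod_univ_four]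
    have hfac : Function.FactorsThrough g E := by
      intro u v huv
      rw [hg, hg]
      have h0 := DFunLike.congr_fun huv 0
      have h1 := DFunLike.congr_fun huv 1
      simp [E] at h0 h1
      exact rat2_main b hb h hi _ _ _ _ _ _ _ _ h0 h1
    let Φ := (basisMonomials (Fin 2) k).constr k (Function.extend E g 0)
    have hΦ : ∀ u, Φ (monomial (E u) 1) = g u := by
      intro u
      have := (basisMonomials (Fin 2) k).constr_basis k (Function.extend E g 0) (E u)
      rw [coe_basisMonomials] at this
      exact this.trans (hfac.extend_apply 0 u)
    have hq : ∀ r, q r = Φ (aeval (R := k) (fun i : Fin 4 =>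
      ![(X 0 : MvPolynomial (Fin 2) k) ^ (2 * (b + 2)),
        X 0 ^ (b + 2 + 2) * X 1 ^ (b + 2 - 2),
        X 0 ^ (b + 2 - 2) * X 1 ^ (b + 2 + 2),
        X 1 ^ (2 * (b + 2))] i) r) := by
      intro r
      have hmon : ∀ u : Fin 4 →₀ ℕ, aeval (R := k) (fun i : Fin 4 =>
          ![(X 0 : MvPolynomial (Fin 2) k) ^ (2 * (b + 2)),
            X 0 ^ (b + 2 + 2) * X 1 ^ (b + 2 - 2),
            X 0 ^ (b + 2 - 2) * X 1 ^ (b + 2 + 2),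
            X 1 ^ (2 * (b + 2))] i) (monomial u (1 : k)) = monomial (E u) 1 := by
        intro u
        have hE : (monomial (E u) (1 : k)) =
            X 0 ^ (2 * (b + 2) * u 0 + (b + 4) * u 1 + b * u 2) *
            X 1 ^ (b * u 1 + (b + 4) * u 2 + 2 * (b + 2) * u 3) := by
          rw [X_pow_eq_monomial, X_pow_eq_monomial, monomial_mul, one_mul]
        rw [hE, aeval_monomial, Finsupp.prod_fintype _ _ (by simp)]
        simp [Fin.prod_univ_four]
        ring
      rw [r.as_sum]
      simp only [map_sum]
      refine Finset.sum_congr rfl fun u _ => ?_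
      have hc : monomial u (coeff u r) = coeff u r • monomial u (1 : k) := by
        rw [smul_monomial, smul_eq_mul, mul_one]
      rw [hc, map_smul, map_smul, map_smul, hmon, hΦ]
    have hp' := hq p
    rw [hp, map_zero] at hp'
    exact Ideal.Quotient.eq_zero_iff_mem.1 hp'
  · rw [Ideal.span_le]
    rintro _ (rfl | ⟨i, rfl⟩)
    · simp only [SetLike.mem_coe, RingHom.mem_ker, map_sub, map_mul, aeval_X]
      simp
      ring
    · simp only [SetLike.mem_coe, RingHom.mem_ker, map_sub, map_mul, map_pow, aeval_X]
      fin_cases i <;> simp <;> ring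
end
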